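/- arXiv:2207.01148 — 3 statements merged into one kernel-verified Lean document; each statement's English description precedes it below -/
import Mathlib

section
/- Let A ∈ ℝ^{n×n}, B ∈ ℝ^{n×m}, and let x : ℕ → ℝⁿ, u : ℕ → ℝᵐ satisfy x(t+1) = A x(t) + B u(t) for all t. Fix L ≥ 1 and N ≥ 1, and form the data matrices X₀ ∈ ℝ^{n×N} (j-th column x(j)), U ∈ ℝ^{(mL)×N} (j-th column stacking u(j),…,u(j+L−1)), X₁ ∈ ℝ^{(nL)×N} (j-th column stacking x(j+1),…,x(j+L)), and S ∈ ℝ^{(n+mL)×N} stacking X₀ on top of U. Assume S Sᵀ is invertible and set S† := Sᵀ (S Sᵀ)⁻¹. Then for every initial state x̂ ∈ ℝⁿ and every stacked input sequence Û = (û(0),…,û(L−1)) ∈ ℝ^{mL}, the vector X₁ S† (x̂; Û) ∈ ℝ^{nL} equals the true stacked predicted state sequence, i.e., its k-th block (1 ≤ k ≤ L) equals A^k x̂ + Σ_{i=0}^{k−1} A^{k−1−i} B û(i). -/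
/-!
Put `g = S† (xInit; Useq)`. Since `S S† = 1`, `S g = (xInit; Useq)`, i.e. `X₀ g = xInit` and
`U g = Useq`. Superposing the `N` time-shifted copies of the recorded trajectory with weights
`g j` gives, by linearity, another trajectory of the same system; its initial state is `xInit`,
its first `L` inputs are `Useq`, and its states at times `1, …, L` are the blocks of `X₁ g`.
The variation-of-constants formula (`variation_of_constants`) for this trajectory is the claim.
-/

open Matrix

theorem variation_of_constants {n m : ℕ}
    (A : Matrix (Fin n) (Fin n) ℝ) (B : Matrix (Fin n) (Fin m) ℝ)
    (y : ℕ → Fin n → ℝ) (w : ℕ → Fin m → ℝ)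
    (h : ∀ t, y (t + 1) = A.mulVec (y t) + B.mulVec (w t)) (k : ℕ) :
    y (k + 1) = (A ^ (k + 1)).mulVec (y 0) +
      ∑ j ∈ Finset.range (k + 1), (A ^ (k - j) * B).mulVec (w j) := by
  induction k with
  | zero => simp [h 0]
  | succ k ih =>
    rw [h (k + 1), ih, Finset.sum_range_succ _ (k + 1), Matrix.mulVec_add, Matrix.mulVec_sum,
      Matrix.mulVec_mulVec, ← pow_succ', Nat.sub_self, pow_zero, Matrix.one_mul, add_assoc]
    congr 2
    refine Finset.sum_congr rfl fun j hj => ?_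
    have hj' : j ≤ k := Nat.lt_succ_iff.mp (Finset.mem_range.mp hj)
    rw [Matrix.mulVec_mulVec, ← Matrix.mul_assoc, ← pow_succ', Nat.sub_add_comm hj']

/-- Data-based multi-step predictor: with data matrices `X₀`, `U`, `X₁` built from a
trajectory of `x(t+1) = A x(t) + B u(t)`, `S = [X₀; U]`, and `S† = Sᵀ (S Sᵀ)⁻¹`, the
vector `X₁ S† (xInit; Useq)` equals the true stacked predicted state sequence: its `k`-th
block (`k = 0, …, L-1`, corresponding to prediction step `k+1`) equals
`A^(k+1) xInit + ∑_{j=0}^{k} A^(k-j) B û(j)`. -/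
theorem data_based_multi_step_predictor
    (n m L N : ℕ) (hL : 1 ≤ L) (hN : 1 ≤ N)
    (A : Matrix (Fin n) (Fin n) ℝ) (B : Matrix (Fin n) (Fin m) ℝ)
    (x : ℕ → Fin n → ℝ) (u : ℕ → Fin m → ℝ)
    (hdyn : ∀ t : ℕ, x (t + 1) = A.mulVec (x t) + B.mulVec (u t))
    (X₀ : Matrix (Fin n) (Fin N) ℝ)
    (hX₀ : ∀ (i : Fin n) (j : Fin N), X₀ i j = x j i)
    (U : Matrix (Fin L × Fin m) (Fin N) ℝ)
    (hU : ∀ (k : Fin L) (r : Fin m) (j : Fin N), U (k, r) j = u (j + k) r)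
    (X₁ : Matrix (Fin L × Fin n) (Fin N) ℝ)
    (hX₁ : ∀ (k : Fin L) (i : Fin n) (j : Fin N), X₁ (k, i) j = x (j + k + 1) i)
    (S : Matrix (Fin n ⊕ Fin L × Fin m) (Fin N) ℝ)
    (hS : S = Matrix.fromRows X₀ U)
    (hGram : IsUnit (S * Sᵀ)) :
    ∀ (xInit : Fin n → ℝ) (Useq : Fin L × Fin m → ℝ) (k : Fin L) (i : Fin n),
      X₁.mulVec ((Sᵀ * (S * Sᵀ)⁻¹).mulVec (Sum.elim xInit Useq)) (k, i) =
        ((A ^ ((k : ℕ) + 1)).mulVec xInit +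
          ∑ j ∈ Finset.Iic k,
            (A ^ ((k : ℕ) - (j : ℕ)) * B).mulVec (fun r => Useq (j, r))) i := by
  intro xInit Useq k i
  set g : Fin N → ℝ := (Sᵀ * (S * Sᵀ)⁻¹).mulVec (Sum.elim xInit Useq) with hg
  have hSg : S.mulVec g = Sum.elim xInit Useq := by
    rw [hg, Matrix.mulVec_mulVec, ← Matrix.mul_assoc,
      Matrix.mul_nonsing_inv _ ((Matrix.isUnit_iff_isUnit_det _).mp hGram), Matrix.one_mulVec]
  rw [hS, Matrix.fromRows_mulVec] at hSg
  -- the superposed trajectory and its input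
  let y : ℕ → Fin n → ℝ := fun t => ∑ j : Fin N, g j • x (j + t)
  let w : ℕ → Fin m → ℝ := fun t => ∑ j : Fin N, g j • u (j + t)
  have hy : ∀ t, y (t + 1) = A.mulVec (y t) + B.mulVec (w t) := by
    intro t
    simp only [y, w, Matrix.mulVec_sum, Matrix.mulVec_smul, ← Finset.sum_add_distrib,
      ← smul_add, ← hdyn, add_assoc]
  have hy0 : y 0 = xInit := by
    funext a
    have h := congrFun hSg (Sum.inl a)
    simp only [Sum.elim_inl] at h
    rw [← h]
    simp [y, Matrix.mulVec, dotProduct, hX₀, mul_comm]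
  have hw : ∀ j : Fin L, w j = fun r => Useq (j, r) := by
    intro j
    funext r
    have h := congrFun hSg (Sum.inr (j, r))
    simp only [Sum.elim_inr] at h
    rw [← h]
    simp [w, Matrix.mulVec, dotProduct, hU, mul_comm]
  have hX : X₁.mulVec g (k, i) = y (k + 1) i := by
    simp [y, Matrix.mulVec, dotProduct, hX₁, mul_comm, add_assoc]
  rw [hX, variation_of_constants A B y w hy k, hy0, Nat.range_succ_eq_Iic,
    ← Fin.map_valEmbedding_Iic, Finset.sum_map]
  simp only [Fin.valEmbedding_apply, hw]
end

section
/- Let A ∈ ℝ^{n×n}, B ∈ ℝ^{n×m}, and let x : ℕ → ℝⁿ, u : ℕ → ℝᵐ satisfy x(t+1) = A x(t) + B u(t) for all t. Fix L ≥ 1, N ≥ 1 and form X₀ ∈ ℝ^{n×N} (j-th column x(j)), U ∈ ℝ^{(mL)×N} (j-th column stacking u(j),…,u(j+L−1)), X₁ ∈ ℝ^{(nL)×N} (j-th column stacking x(j+1),…,x(j+L)). Suppose K ∈ ℝ^{(mL)×n}, f ∈ ℝ^{mL}, G_K ∈ ℝ^{N×n} and G_f ∈ ℝᴺ satisfy X₀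 G_K = I, U G_K = K, X₀ G_f = 0 and U G_f = f. Then for every x̂ ∈ ℝⁿ: (i) U (G_K x̂ + G_f) = K x̂ + f, and (ii) the k-th block (1 ≤ k ≤ L) of X₁ (G_K x̂ + G_f) equals A^k x̂ + Σ_{i=0}^{k−1} A^{k−1−i} B û(i), where Û = (û(0),…,û(L−1)) := K x̂ + f; i.e., X₁ (G_K x̂ + G_f) is the true stacked state sequence generated from x̂ under the affine law. -/
/-!
Write `g = G_K x̂ + G_f`. The data constraints say that the combination of the recorded windows
with coefficients `g` starts at `X₀ g = x̂` and has inputs `U g = K x̂ + f`. By linearity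
(`combination_step`) this combination is itself a trajectory of the system, so unrolling the
recursion (`unroll_dynamics`) gives the variation-of-constants formula for its states, which are
the blocks of `X₁ g`.
-/

open Matrix

/-- Linear combinations of time shifts of a trajectory obey the same dynamics. -/
lemma combination_step {n m N : ℕ}
    (A : Matrix (Fin n) (Fin n) ℝ) (B : Matrix (Fin n) (Fin m) ℝ)
    (x : ℕ → Fin n → ℝ) (u : ℕ → Fin m → ℝ)
    (hdyn : ∀ t : ℕ, x (t + 1) = A.mulVec (x t) + B.mulVec (u t))
    (g : Fin N → ℝ) (s : ℕ) :
    ∑ j : Fin N, g j • x ((j : ℕ) + (s + 1)) =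
      A.mulVec (∑ j : Fin N, g j • x ((j : ℕ) + s)) +
        B.mulVec (∑ j : Fin N, g j • u ((j : ℕ) + s)) := by
  simp only [← add_assoc, hdyn, Matrix.mulVec_sum, Matrix.mulVec_smul, smul_add,
    Finset.sum_add_distrib]

/-- Variation-of-constants formula for `z (s + 1) = A z s + B w s`. -/
lemma unroll_dynamics {n m : ℕ}
    (A : Matrix (Fin n) (Fin n) ℝ) (B : Matrix (Fin n) (Fin m) ℝ)
    (z : ℕ → Fin n → ℝ) (w : ℕ → Fin m → ℝ)
    (h : ∀ s : ℕ, z (s + 1) = A.mulVec (z s) + B.mulVec (w s)) (s : ℕ) :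
    z (s + 1) = (A ^ (s + 1)).mulVec (z 0) +
      ∑ j ∈ Finset.range (s + 1), (A ^ (s - j) * B).mulVec (w j) := by
  induction s with
  | zero => simp [h 0]
  | succ s ih =>
    rw [h (s + 1), ih, Finset.sum_range_succ _ (s + 1), Matrix.mulVec_add, Matrix.mulVec_sum,
      Matrix.mulVec_mulVec, ← pow_succ', add_assoc]
    congr 2
    · refine Finset.sum_congr rfl fun j hj => ?_
      have hj' : j ≤ s := Nat.lt_succ_iff.mp (Finset.mem_range.mp hj)
      rw [Matrix.mulVec_mulVec, ← Matrix.mul_assoc, ← pow_succ', Nat.sub_add_comm hj']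
    · simp

/-- An initial segment of `Fin L` is summed as the corresponding range of naturals. -/
lemma sum_Iic_fin {M : Type*} [AddCommMonoid M] {L : ℕ} (k : Fin L) (F : ℕ → M) :
    ∑ j ∈ Finset.Iic k, F (j : ℕ) = ∑ j ∈ Finset.range ((k : ℕ) + 1), F j := by
  rw [Nat.range_succ_eq_Iic, ← Fin.map_valEmbedding_Iic, Finset.sum_map]
  rfl

/-- Closed-loop multi-step predictor: if `X₀ G_K = I`, `U G_K = K`, `X₀ G_f = 0`,
`U G_f = f`, then for every state `x̂`: (i) `U (G_K x̂ + G_f) = K x̂ + f`, and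
(ii) `X₁ (G_K x̂ + G_f)` is the true stacked state sequence generated from `x̂`
under the affine law `Û = K x̂ + f`, i.e. its `k`-th block (`k = 0, …, L-1`,
prediction step `k+1`) equals `A^(k+1) x̂ + ∑_{j=0}^{k} A^(k-j) B û(j)`. -/
theorem closed_loop_multi_step_predictor
    (n m L N : ℕ) (hL : 1 ≤ L) (hN : 1 ≤ N)
    (A : Matrix (Fin n) (Fin n) ℝ) (B : Matrix (Fin n) (Fin m) ℝ)
    (x : ℕ → Fin n → ℝ) (u : ℕ → Fin m → ℝ)
    (hdyn : ∀ t : ℕ, x (t + 1) = A.mulVec (x t) + B.mulVec (u t))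
    (X₀ : Matrix (Fin n) (Fin N) ℝ)
    (hX₀ : ∀ (i : Fin n) (j : Fin N), X₀ i j = x j i)
    (U : Matrix (Fin L × Fin m) (Fin N) ℝ)
    (hU : ∀ (k : Fin L) (r : Fin m) (j : Fin N), U (k, r) j = u (j + k) r)
    (X₁ : Matrix (Fin L × Fin n) (Fin N) ℝ)
    (hX₁ : ∀ (k : Fin L) (i : Fin n) (j : Fin N), X₁ (k, i) j = x (j + k + 1) i)
    (K : Matrix (Fin L × Fin m) (Fin n) ℝ) (f : Fin L × Fin m → ℝ)
    (GK : Matrix (Fin N) (Fin n) ℝ) (Gf : Fin N → ℝ)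
    (hGK1 : X₀ * GK = 1) (hGK2 : U * GK = K)
    (hGf1 : X₀.mulVec Gf = 0) (hGf2 : U.mulVec Gf = f) :
    ∀ xInit : Fin n → ℝ,
      U.mulVec (GK.mulVec xInit + Gf) = K.mulVec xInit + f ∧
      ∀ (k : Fin L) (i : Fin n),
        X₁.mulVec (GK.mulVec xInit + Gf) (k, i) =
          ((A ^ ((k : ℕ) + 1)).mulVec xInit +
            ∑ j ∈ Finset.Iic k,
              (A ^ ((k : ℕ) - (j : ℕ)) * B).mulVec
                (fun r => (K.mulVec xInit + f) (j, r))) i := by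
  intro xInit
  have hin : U.mulVec (GK.mulVec xInit + Gf) = K.mulVec xInit + f := by
    rw [Matrix.mulVec_add, Matrix.mulVec_mulVec, hGK2, hGf2]
  have hst : X₀.mulVec (GK.mulVec xInit + Gf) = xInit := by
    rw [Matrix.mulVec_add, Matrix.mulVec_mulVec, hGK1, hGf1, Matrix.one_mulVec, add_zero]
  refine ⟨hin, fun k i => ?_⟩
  rw [← hin]
  generalize GK.mulVec xInit + Gf = g at hst ⊢
  have key := unroll_dynamics A B (fun s => ∑ j : Fin N, g j • x ((j : ℕ) + s))
    (fun s => ∑ j : Fin N, g j • u ((j : ℕ) + s)) (combination_step A B x u hdyn g) k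
  have h0 : ∑ j : Fin N, g j • x ((j : ℕ) + 0) = xInit := by
    rw [← hst]
    ext a
    simp [Matrix.mulVec, dotProduct, hX₀, mul_comm]
  have hw : ∀ l : Fin L, (fun r => U.mulVec g (l, r)) =
      ∑ j : Fin N, g j • u ((j : ℕ) + (l : ℕ)) := by
    intro l
    ext r
    simp [Matrix.mulVec, dotProduct, hU, mul_comm]
  have hz : X₁.mulVec g (k, i) = (∑ j : Fin N, g j • x ((j : ℕ) + ((k : ℕ) + 1))) i := by
    simp [Matrix.mulVec, dotProduct, hX₁, mul_comm, add_assoc]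
  simp only [h0] at key
  rw [hz, key, ← sum_Iic_fin k]
  simp only [hw]
end

section
/- Let A ∈ ℝ^{n×n}, B ∈ ℝ^{n×m} with the pair (A,B) controllable, i.e., the controllability matrix [B AB ⋯ A^{n−1}B] ∈ ℝ^{n×nm} has rank n. Let u : ℕ → ℝᵐ be persistently exciting of order n+L, i.e., the depth-(n+L) input Hankel matrix with columns stacking u(j),…,u(j+n+L−1) for j = 0,…,T−(n+L) has full row rank m(n+L), where T ≥ (m+1)(n+L) − 1. Let x : ℕ → ℝⁿ satisfy x(t+1) = A x(t) + B u(t), and form X₀ ∈ ℝ^{n×(T−L+1)} with j-th column x(j) and the depth-L input Hankel matrix U ∈ ℝ^{(mL)×(T−L+1)} with j-th column stacking u(j),…,u(j+L−1), for j = 0,…,T−L. Then the stacked matrix [X₀; U] ∈ ℝ^{(n+mL)×(T−L+1)} has rank n + mL (full row rank). -/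
/-!
The rows of `[X₀; U]` are shown to be linearly independent. Let `(ξ, η)` be a left annihilator:
`ξ ⬝ x(j) + ∑ₖ ηₖ ⬝ u(j+k) = 0` for all `j ≤ T - L`. Encode it as one two-sided sequence of
row vectors `g : ℤ → ℝᵐ`, with `g k = ηₖ` for `0 ≤ k` (zero for `k ≥ L`) and
`g (-1-p) = ξ Aᵖ B` for `p ≥ 0`. Unrolling the dynamics `i ≤ n` steps turns the relation at time
`j + i` into `ξ Aⁱ x(j) + ∑_{s < n+L} g(s-i) ⬝ u(j+s) = 0` (`shifted_relation`).
Summing against the coefficients `cᵢ` of the characteristic polynomial of `A` removes the state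
term by Cayley–Hamilton, and persistency of excitation gives `∑ᵢ cᵢ g(s-i) = 0` for all
`s < n+L`. As `cₙ = 1` and `g` vanishes from `L` on, this recursion, run downwards, forces
`g k = 0` for all `k ≥ -n` (`backward_recursion`). Hence `η = 0` and `ξ Aᵖ B = 0` for `p < n`,
and controllability yields `ξ = 0`.
-/

open Matrix

lemma rank_eq_card_iff_vecMul {ι κ : Type*} [Fintype ι] [Fintype κ] (M : Matrix ι κ ℝ) :
    M.rank = Fintype.card ι ↔ ∀ v : ι → ℝ, v ᵥ* M = 0 → v = 0 := by
  have h1 : M.rank = Fintype.card ι ↔ LinearIndependent ℝ M.row := by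
    rw [linearIndependent_iff_card_eq_finrank_span, Set.finrank, ← Matrix.rank_eq_finrank_span_row]
    exact eq_comm
  rw [h1, ← Matrix.vecMul_injective_iff]
  constructor
  · intro h v hv
    exact h (by simpa using hv)
  · intro h v w hvw
    have := h (v - w) (by rw [Matrix.sub_vecMul]; exact sub_eq_zero.2 hvw)
    exact sub_eq_zero.1 this

/-- The two-sided coefficient sequence attached to a left annihilator `(ξ, η)`: `η k` at
`k ≥ 0`, and the Markov-type row `ξ Aᵖ B` at `-1 - p`. -/
noncomputable def coeffSeq {n m : ℕ} (A : Matrix (Fin n) (Fin n) ℝ) (B : Matrix (Fin n) (Fin m) ℝ)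
    (ξ : Fin n → ℝ) (η : ℕ → Fin m → ℝ) : ℤ → Fin m → ℝ
  | Int.ofNat k => η k
  | Int.negSucc p => ξ ᵥ* (A ^ p * B)

/-- Unrolling the dynamics: the left-hand side is the annihilator relation at time `j + i`,
the right-hand side expresses it through the state at time `j`. The bound `i ≤ n` keeps all
inputs within the window of length `n + L`. -/
lemma shifted_relation {n m L : ℕ} (A : Matrix (Fin n) (Fin n) ℝ) (B : Matrix (Fin n) (Fin m) ℝ)
    (u : ℕ → Fin m → ℝ) (x : ℕ → Fin n → ℝ)
    (hdyn : ∀ t : ℕ, x (t + 1) = A.mulVec (x t) + B.mulVec (u t))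
    (ξ : Fin n → ℝ) (η : ℕ → Fin m → ℝ) (hη : ∀ k, L ≤ k → η k = 0) (i : ℕ) (hi : i ≤ n) (j : ℕ) :
    ξ ⬝ᵥ x (j + i) + ∑ k ∈ Finset.range L, η k ⬝ᵥ u (j + i + k) =
      (ξ ᵥ* A ^ i) ⬝ᵥ x j +
        ∑ s ∈ Finset.range (n + L), coeffSeq A B ξ η ((s : ℤ) - i) ⬝ᵥ u (j + s) := by
  induction i generalizing j with
  | zero =>
    simp only [add_zero, pow_zero, Matrix.vecMul_one, Nat.cast_zero, sub_zero]
    congr 1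
    apply Finset.sum_subset
    · intro k hk
      simp only [Finset.mem_range] at *
      omega
    · intro k _ hk
      simp only [Finset.mem_range, not_lt] at hk
      simp [hη k hk]
  | succ i ih =>
    have h := ih (by omega) (j + 1)
    rw [show j + (i + 1) = j + 1 + i by omega, h, hdyn, dotProduct_add]
    obtain ⟨N, hN⟩ : ∃ N, n + L = N + 1 := ⟨n + L - 1, by omega⟩
    rw [hN, Finset.sum_range_succ, Finset.sum_range_succ' _ N]
    -- the input leaving the window carries a zero coefficient
    have hlast : coeffSeq A B ξ η ((N : ℤ) - i) = 0 := by
      rw [show (N : ℤ) - i = Int.ofNat (N - i) by simp; omega]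
      exact hη _ (by omega)
    have hfirst : coeffSeq A B ξ η (((0 : ℕ) : ℤ) - ((i + 1 : ℕ) : ℤ)) = ξ ᵥ* (A ^ i * B) := by
      rw [show ((0 : ℕ) : ℤ) - ((i + 1 : ℕ) : ℤ) = Int.negSucc i by omega]
      rfl
    have hsum : ∀ s ∈ Finset.range N,
        coeffSeq A B ξ η ((s : ℤ) - i) ⬝ᵥ u (j + 1 + s) =
        coeffSeq A B ξ η (((s + 1 : ℕ) : ℤ) - ((i + 1 : ℕ) : ℤ)) ⬝ᵥ u (j + (s + 1)) := by
      intro s _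
      rw [show ((s + 1 : ℕ) : ℤ) - ((i + 1 : ℕ) : ℤ) = (s : ℤ) - i by push_cast; ring,
        show j + (s + 1) = j + 1 + s by omega]
    rw [hlast, hfirst, Finset.sum_congr rfl hsum, pow_succ, Matrix.dotProduct_mulVec,
      Matrix.dotProduct_mulVec, Matrix.vecMul_vecMul, Matrix.vecMul_vecMul]
    simp only [zero_dotProduct, add_zero]
    ring

/-- A sequence vanishing from `L` on and satisfying a monic recursion of order `n` on the window
`[-n, L)` vanishes on that window; here `g (L - 1 - q)` is treated by strong induction on `q`. -/
lemma backward_recursion {V : Type*} [AddCommGroup V] [Module ℝ V] {n L : ℕ} (c : ℕ → ℝ)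
    (hc : c n = 1) (g : ℤ → V) (hg : ∀ z : ℤ, (L : ℤ) ≤ z → g z = 0)
    (hrec : ∀ s : ℕ, s < n + L → ∑ i ∈ Finset.range (n + 1), c i • g ((s : ℤ) - i) = 0)
    (q : ℕ) (hq : q < n + L) : g ((L : ℤ) - 1 - q) = 0 := by
  induction q using Nat.strong_induction_on with
  | _ q ih =>
    have h := hrec (n + L - 1 - q) (by omega)
    rw [Finset.sum_range_succ, Finset.sum_eq_zero, hc, zero_add, one_smul] at h
    · rw [← h]
      congr 1
      omega
    · intro i hi
      rw [Finset.mem_range] at hi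
      by_cases hb : n ≤ q + i
      · have := ih (q + i - n) (by omega) (by omega)
        rw [show (((n + L - 1 - q : ℕ) : ℤ) - i) = (L : ℤ) - 1 - ((q + i - n : ℕ) : ℤ) by omega,
          this, smul_zero]
      · rw [hg _ (by omega), smul_zero]

/-- Willems' fundamental lemma rank condition: for a controllable pair `(A,B)` and an
input persistently exciting of order `n+L` (depth-`(n+L)` input Hankel matrix of full
row rank `m(n+L)`), with `T ≥ (m+1)(n+L) − 1`, the stacked data matrix `[X₀; U]`
built from a state trajectory of `x(t+1) = A x(t) + B u(t)` has full row rank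
`n + mL`. -/
theorem fundamental_lemma_rank_condition
    (n m L T : ℕ) (hL : 1 ≤ L)
    (hT : (m + 1) * (n + L) - 1 ≤ T)
    (A : Matrix (Fin n) (Fin n) ℝ) (B : Matrix (Fin n) (Fin m) ℝ)
    (ctrb : Matrix (Fin n) (Fin n × Fin m) ℝ)
    (hctrb : ∀ (i : Fin n) (k : Fin n) (j : Fin m), ctrb i (k, j) = (A ^ (k : ℕ) * B) i j)
    (hcontrollable : ctrb.rank = n)
    (u : ℕ → Fin m → ℝ)
    (Hankel : Matrix (Fin (n + L) × Fin m) (Fin (T - (n + L) + 1)) ℝ)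
    (hHankel : ∀ (k : Fin (n + L)) (r : Fin m) (j : Fin (T - (n + L) + 1)),
      Hankel (k, r) j = u (j + k) r)
    (hPE : Hankel.rank = m * (n + L))
    (x : ℕ → Fin n → ℝ)
    (hdyn : ∀ t : ℕ, x (t + 1) = A.mulVec (x t) + B.mulVec (u t))
    (X₀ : Matrix (Fin n) (Fin (T - L + 1)) ℝ)
    (hX₀ : ∀ (i : Fin n) (j : Fin (T - L + 1)), X₀ i j = x j i)
    (U : Matrix (Fin L × Fin m) (Fin (T - L + 1)) ℝ)
    (hU : ∀ (k : Fin L) (r : Fin m) (j : Fin (T - L + 1)), U (k, r) j = u (j + k) r) :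
    (Matrix.fromRows X₀ U).rank = n + m * L := by
  -- truncated subtraction is harmless: for `m = 0` controllability forces `n = 0`,
  -- and for `m ≥ 1` the length bound gives `n + L ≤ T`
  have hlen : T - (n + L) + n ≤ T - L := by
    rcases Nat.eq_zero_or_pos m with rfl | hm
    · have h := ctrb.rank_le_card_width
      simp only [Fintype.card_prod, Fintype.card_fin, mul_zero] at h
      omega
    · have : 2 * (n + L) ≤ (m + 1) * (n + L) := Nat.mul_le_mul_right _ (by omega)
      omega
  have hctrb' := (rank_eq_card_iff_vecMul ctrb).1 (by simpa using hcontrollable)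
  have hPE' := (rank_eq_card_iff_vecMul Hankel).1 (by
    rw [hPE, Fintype.card_prod, Fintype.card_fin, Fintype.card_fin, mul_comm])
  rw [show n + m * L = Fintype.card (Fin n ⊕ Fin L × Fin m) by simp [mul_comm],
    rank_eq_card_iff_vecMul]
  intro v hv
  set ξ : Fin n → ℝ := fun i => v (Sum.inl i) with hξ
  set η : ℕ → Fin m → ℝ := fun k r => if h : k < L then v (Sum.inr (⟨k, h⟩, r)) else 0 with hηdef
  have hη : ∀ k, L ≤ k → η k = 0 := by
    intro k hk
    ext r
    simp [hηdef, not_lt.2 hk]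
  have hrel : ∀ t : ℕ, t ≤ T - L →
      ξ ⬝ᵥ x t + ∑ k ∈ Finset.range L, η k ⬝ᵥ u (t + k) = 0 := by
    intro t ht
    have h := congrFun hv ⟨t, by omega⟩
    simp only [Matrix.vecMul, dotProduct, Fintype.sum_sum_type, Matrix.fromRows_apply_inl,
      Matrix.fromRows_apply_inr, Fintype.sum_prod_type, hX₀, hU, Pi.zero_apply] at h
    rw [← h, Finset.sum_range]
    simp [dotProduct, hηdef, hξ]
  set c : ℕ → ℝ := fun i => A.charpoly.coeff i with hcdef
  have hdeg : A.charpoly.natDegree = n := by simp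
  have hcn : c n = 1 := by
    have := A.charpoly_monic.coeff_natDegree
    rwa [hdeg] at this
  have hCH : ∑ i ∈ Finset.range (n + 1), c i • A ^ i = 0 := by
    have := A.aeval_self_charpoly
    rwa [Polynomial.aeval_eq_sum_range, hdeg] at this
  set g := coeffSeq A B ξ η with hgdef
  have hrec : ∀ s : ℕ, s < n + L →
      ∑ i ∈ Finset.range (n + 1), c i • g ((s : ℤ) - i) = 0 := by
    have key := hPE' (fun p => (∑ i ∈ Finset.range (n + 1), c i • g ((p.1 : ℕ) - (i : ℤ))) p.2) (by
      ext j
      have hj : ∀ i ∈ Finset.range (n + 1), c i * ((ξ ᵥ* A ^ i) ⬝ᵥ x j +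
          ∑ s ∈ Finset.range (n + L), g ((s : ℤ) - i) ⬝ᵥ u (j + s)) = 0 := by
        intro i hi
        rw [Finset.mem_range] at hi
        rw [← shifted_relation A B u x hdyn ξ η hη i (by omega) j, hrel _ (by omega), mul_zero]
      have hsum := Finset.sum_eq_zero hj
      simp only [mul_add, Finset.sum_add_distrib] at hsum
      have hstate : ∑ i ∈ Finset.range (n + 1), c i * ((ξ ᵥ* A ^ i) ⬝ᵥ x j) = 0 := by
        have : ∑ i ∈ Finset.range (n + 1), c i * ((ξ ᵥ* A ^ i) ⬝ᵥ x j) =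
            ξ ⬝ᵥ ((∑ i ∈ Finset.range (n + 1), c i • A ^ i) *ᵥ x j) := by
          rw [Matrix.sum_mulVec, dotProduct_sum]
          refine Finset.sum_congr rfl fun i _ => ?_
          rw [Matrix.smul_mulVec, dotProduct_smul, Matrix.dotProduct_mulVec, smul_eq_mul]
        rw [this, hCH, Matrix.zero_mulVec, dotProduct_zero]
      rw [hstate, zero_add] at hsum
      rw [Pi.zero_apply, ← hsum]
      simp only [Matrix.vecMul, dotProduct, Fintype.sum_prod_type, hHankel, Finset.sum_apply,
        Pi.smul_apply, smul_eq_mul, Finset.sum_mul, Finset.mul_sum]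
      simp only [Finset.sum_range fun s => ∑ r, _ * (g ((s : ℤ) - _) r * u (j + s) r)]
      rw [Finset.sum_comm' (t' := Finset.univ) (s' := fun _ => Finset.range (n + 1)) (by simp)]
      refine Finset.sum_congr rfl fun s _ => ?_
      rw [Finset.sum_comm]
      simp only [mul_assoc])
    intro s hs
    ext r
    exact congrFun key (⟨s, hs⟩, r)
  have hg : ∀ z : ℤ, (L : ℤ) ≤ z → g z = 0 := by
    intro z hz
    rw [show z = Int.ofNat z.toNat by simp; omega]
    exact hη _ (by omega)
  have hzero := backward_recursion c hcn g hg hrec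
  have hξ0 : ξ = 0 := by
    apply hctrb'
    ext ⟨p, r⟩
    have h := hzero (L + p) (by omega)
    rw [show (L : ℤ) - 1 - ((L + p : ℕ) : ℤ) = Int.negSucc p by omega] at h
    have h' : (ξ ᵥ* (A ^ (p : ℕ) * B)) r = 0 := congrFun h r
    rw [Pi.zero_apply, ← h']
    simp only [Matrix.vecMul, dotProduct, hctrb]
  ext (i | ⟨k, r⟩)
  · exact congrFun hξ0 i
  · have h := hzero (L - 1 - k) (by omega)
    rw [show (L : ℤ) - 1 - ((L - 1 - k : ℕ) : ℤ) = Int.ofNat k by simp; omega] at h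
    have h' : η k r = 0 := congrFun h r
    simpa [hηdef] using h'
end
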